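/- Let α ∈ (0,1/2) and let E ⊆ 𝕋 be a Carleson set of Lebesgue measure zero. Then the two-sided estimate D_ζ(f_{α,E}) ≍ dist(ζ,E)^{2α−1}, with implied constants independent of ζ ∈ 𝕋∖E, holds if and only if E is an 𝓛₁-set. -/

import Mathlib

open MeasureTheory Real Set

noncomputable section

/-- The unit circle in `ℂ`. -/
def circleT : Set ℂ := Metric.sphere (0 : ℂ) 1

/-- Arc-length parametrization of the unit circle. -/
def cpt (θ : ℝ) : ℂ := Complex.exp (θ * Complex.I)

/-- Distance from a point to a set. -/
def dE (E : Set ℂ) (ζ : ℂ) : ℝ := Metric.infDist ζ E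

/-- Arc-length integral over the whole circle. -/
def circInt (f : ℂ → ℝ) : ℝ := ∫ θ in Set.Ioc 0 (2 * π), f (cpt θ)

/-- Arc-length integral over a subset `Λ` of the circle. -/
def circIntOn (Λ : Set ℂ) (f : ℂ → ℝ) : ℝ :=
  ∫ θ in {θ ∈ Set.Ioc 0 (2 * π) | cpt θ ∈ Λ}, f (cpt θ)

/-- `E` has arc-length (Lebesgue) measure zero. -/
def MeasureZeroOnCircle (E : Set ℂ) : Prop :=
  volume {θ ∈ Set.Ioc 0 (2 * π) | cpt θ ∈ E} = 0

/-- `E` is a Carleson set: `∫_𝕋 log dist(ζ,E) |dζ| > -∞`. -/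
def CarlesonSet (E : Set ℂ) : Prop :=
  IntegrableOn (fun θ => Real.log (dE E (cpt θ))) (Set.Ioc 0 (2 * π)) volume

/-- `I(ζ,E)`: the connected component of `𝕋 \ E` containing `ζ`. -/
def compArc (E : Set ℂ) (ζ : ℂ) : Set ℂ := connectedComponentIn (circleT \ E) ζ

/-- `Γ(ζ,E)`. -/
def GammaSet (E : Set ℂ) (ζ : ℂ) : Set ℂ :=
  {ζ' ∈ circleT \ compArc E ζ | dE E ζ' ≤ dE E ζ}

/-- `Σ(ζ,E)`. -/
def SigmaSet (E : Set ℂ) (ζ : ℂ) : Set ℂ :=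
  {ζ' ∈ circleT \ compArc E ζ | dE E ζ ≤ dE E ζ'}

/-- The Richter–Sundberg integrand for the outer function with boundary modulus
`ω(dist(·,E))`. -/
def RSker (ω : ℝ → ℝ) (E : Set ℂ) (ζ ζ' : ℂ) : ℝ :=
  ((ω (dE E ζ')) ^ 2 - (ω (dE E ζ)) ^ 2
    - 2 * (ω (dE E ζ)) ^ 2 * Real.log (ω (dE E ζ') / ω (dE E ζ))) / ‖ζ - ζ'‖ ^ 2

/-- Local Dirichlet integral `D_ζ(f_{ω,E})` (Richter–Sundberg formula). -/
def locDir (ω : ℝ → ℝ) (E : Set ℂ) (ζ : ℂ) : ℝ :=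
  (1 / (2 * π)) * circInt (fun ζ' => RSker ω E ζ ζ')

/-- Local Dirichlet integral restricted to `Λ`. -/
def locDirOn (ω : ℝ → ℝ) (E : Set ℂ) (Λ : Set ℂ) (ζ : ℂ) : ℝ :=
  (1 / (2 * π)) * circIntOn Λ (fun ζ' => RSker ω E ζ ζ')

/-- `E` is an `𝓛₁`-set. -/
def L1Set (E : Set ℂ) : Prop :=
  ∃ C > 0, ∀ ζ ∈ circleT \ E,
    circIntOn (GammaSet E ζ)
      (fun ζ' => Real.log (dE E ζ / dE E ζ') / ‖ζ - ζ'‖ ^ 2) ≤ C / dE E ζ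

/-- The `𝓛₂` inequality with constant `C`. -/
def L2With (E : Set ℂ) (C : ℝ) : Prop :=
  ∀ ζ ∈ circleT \ E,
    circIntOn (GammaSet E ζ)
      (fun ζ' => (Real.log (dE E ζ / dE E ζ')) ^ 2 / ‖ζ - ζ'‖ ^ 2) ≤ C / dE E ζ

/-- `E` is an `𝓛₂`-set. -/
def L2Set (E : Set ℂ) : Prop := ∃ C > 0, L2With E C

/-- Supremum of `dist(·,E)` over the arc `cpt '' (a,b]`. -/
def arcSup (E : Set ℂ) (a b : ℝ) : ℝ := sSup ((fun θ => dE E (cpt θ)) '' Set.Ioc a b)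

/-- `E` is a `𝒦`-set (Kotochigov). -/
def KSet (E : Set ℂ) : Prop :=
  ∃ c > 0, ∀ a b : ℝ, a < b → b ≤ a + 2 * π → c * (b - a) ≤ arcSup E a b

/-- Integral of a weight over the arc `cpt '' (a,b]` (with respect to arc length). -/
def arcInt (w : ℂ → ℝ) (a b : ℝ) : ℝ := ∫ θ in Set.Ioc a b, w (cpt θ)

/-- Double logarithmic integral of a weight over an arc. -/
def arcDouble (w : ℂ → ℝ) (a b : ℝ) : ℝ :=
  ∫ θ in Set.Ioc a b, (∫ θ' in Set.Ioc a b,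
    Real.log (1 / ‖cpt θ - cpt θ'‖) * w (cpt θ) * w (cpt θ'))

/-- Arc-length measure of `{ζ ∈ I : dist(ζ,E) ≤ t}` for the arc `cpt '' (a,b]`. -/
def sublevelMeas (E : Set ℂ) (a b t : ℝ) : ℝ :=
  (volume {θ ∈ Set.Ioc a b | dE E (cpt θ) ≤ t}).toReal

/-- Arc-length measure of `E_t = {ζ ∈ 𝕋 : dist(ζ,E) ≤ t}`. -/
def EtMeas (E : Set ℂ) (t : ℝ) : ℝ := sublevelMeas E 0 (2 * π) t

/-- The open unit disc. -/
def unitDisc : Set ℂ := Metric.ball (0 : ℂ) 1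

/-- Membership in the (holomorphic) Dirichlet space `𝒟`. -/
def MemDirichlet (f : ℂ → ℂ) : Prop :=
  DifferentiableOn ℂ f unitDisc ∧
  (∃ M : ℝ, ∀ r ∈ Set.Ioo (0 : ℝ) 1,
    (∫ θ in Set.Ioc 0 (2 * π), ‖f ((r : ℂ) * cpt θ)‖ ^ 2) ≤ M) ∧
  IntegrableOn (fun z => ‖deriv f z‖ ^ 2) unitDisc volume

/-- `f` is a multiplier of the Dirichlet space `𝒟`. -/
def IsMultiplierD (f : ℂ → ℂ) : Prop :=
  ∀ g : ℂ → ℂ, MemDirichlet g → MemDirichlet (fun z => f z * g z)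

/-- The outer function `f_{ω,E}` with boundary modulus `ω(dist(·,E))`. -/
def outerFun (ω : ℝ → ℝ) (E : Set ℂ) (z : ℂ) : ℂ :=
  Complex.exp ((((2 * π)⁻¹ : ℝ) : ℂ) * ∫ θ in Set.Ioc 0 (2 * π),
    ((cpt θ + z) / (cpt θ - z)) * ((Real.log (ω (dE E (cpt θ))) : ℝ) : ℂ))

/-- `log ω(dist(·,E)) ∈ L¹(𝕋)`. -/
def LogOmegaInt (ω : ℝ → ℝ) (E : Set ℂ) : Prop :=
  IntegrableOn (fun θ => Real.log (ω (dE E (cpt θ)))) (Set.Ioc 0 (2 * π)) volume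

/-- Standing hypotheses on `ω` (with derivative `ω'`): continuous, positive, increasing on
`(0,π]`, differentiable with derivative `ω'`, `t ↦ ω(t^γ)` concave, and `t ↦ tω'(t)/ω(t)`
increasing. -/
def OmegaHyp (ω ω' : ℝ → ℝ) (γ : ℝ) : Prop :=
  ContinuousOn ω (Set.Ioc 0 π) ∧
  (∀ t ∈ Set.Ioc (0 : ℝ) π, 0 < ω t) ∧
  MonotoneOn ω (Set.Ioc 0 π) ∧
  (∀ t ∈ Set.Ioo (0 : ℝ) π, HasDerivAt ω (ω' t) t) ∧
  ConcaveOn ℝ (Set.Ioc 0 (π ^ γ⁻¹)) (fun t => ω (t ^ γ)) ∧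
  MonotoneOn (fun t => t * ω' t / ω t) (Set.Ioo 0 π)

/-- The generalized Cantor set `E_{(ζ_n)}` (with `ξ k` playing the role of `ζ_{k+1}`). -/
def gCantorSet (ξ : ℕ → ℝ) : Set ℂ :=
  {z | ∃ ε : ℕ → Bool, z = Complex.exp (((2 * π : ℝ) : ℂ) * Complex.I *
    ((∑' n : ℕ, (if ε n then (1 : ℝ) else 0) * (∏ k ∈ Finset.range n, ξ k) * (1 - ξ n) : ℝ) : ℂ))}

end

lemma cpt_periodic : Function.Periodic cpt (2 * π) := by
  intro θ
  simp only [cpt]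
  push_cast
  rw [add_mul, Complex.exp_add, Complex.exp_two_pi_mul_I, mul_one]

lemma continuous_cpt : Continuous cpt := by
  unfold cpt
  fun_prop

lemma norm_cpt (θ : ℝ) : ‖cpt θ‖ = 1 := Complex.norm_exp_ofReal_mul_I θ

lemma cpt_mem_circleT (θ : ℝ) : cpt θ ∈ circleT := by
  simp [circleT, norm_cpt]

lemma cpt_add (a b : ℝ) : cpt (a + b) = cpt a * cpt b := by
  simp only [cpt, Complex.ofReal_add, add_mul, Complex.exp_add]

lemma norm_cpt_sub_cpt (a b : ℝ) : ‖cpt a - cpt b‖ = 2 * |Real.sin ((a - b) / 2)| := by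
  have h : cpt a - cpt b = cpt b * (Complex.exp (Complex.I * ((a - b : ℝ) : ℂ)) - 1) := by
    rw [mul_sub, mul_one, mul_comm Complex.I]
    change _ = cpt b * cpt (a - b) - cpt b
    rw [← cpt_add, add_sub_cancel]
  rw [h, norm_mul, norm_cpt, Complex.norm_exp_I_mul_ofReal_sub_one, norm_mul]
  simp

lemma norm_cpt_sub_cpt_le (a b : ℝ) : ‖cpt a - cpt b‖ ≤ |a - b| := by
  rw [norm_cpt_sub_cpt]
  have := Real.abs_sin_le_abs (x := (a - b) / 2)
  rw [abs_div, abs_two] at this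
  linarith

lemma mul_abs_sub_le_norm_cpt_sub_cpt {a b : ℝ} (h : |a - b| ≤ π) :
    2 / π * |a - b| ≤ ‖cpt a - cpt b‖ := by
  rw [norm_cpt_sub_cpt]
  have h2 : |(a - b) / 2| = |a - b| / 2 := by rw [abs_div, abs_two]
  have := Real.mul_abs_le_abs_sin (x := (a - b) / 2) (by rw [h2]; linarith)
  rw [h2] at this
  linarith

lemma half_abs_sub_le_norm_cpt_sub_cpt {a b : ℝ} (h : |a - b| ≤ π) :
    |a - b| / 2 ≤ ‖cpt a - cpt b‖ := by
  refine le_trans ?_ (mul_abs_sub_le_norm_cpt_sub_cpt h)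
  have : 1 / 2 ≤ 2 / π := by
    rw [div_le_div_iff₀ two_pos pi_pos]
    linarith [pi_le_four]
  nlinarith [abs_nonneg (a - b)]

lemma cpt_arg_div {z : ℂ} (hz : ‖z‖ = 1) : cpt z.arg = z := by
  have := Complex.norm_mul_exp_arg_mul_I z
  rwa [hz, Complex.ofReal_one, one_mul] at this

lemma exists_cpt_eq {z : ℂ} (hz : z ∈ circleT) (t : ℝ) : ∃ φ, |t - φ| ≤ π ∧ cpt φ = z := by
  have hz : ‖z‖ = 1 := by simpa [circleT] using hz
  have h0 : cpt t ≠ 0 := by simp [cpt]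
  refine ⟨t + (z / cpt t).arg, ?_, ?_⟩
  · simpa using Complex.abs_arg_le_pi _
  · rw [cpt_add, cpt_arg_div (by rw [norm_div, hz, norm_cpt, div_one]), mul_div_cancel₀ _ h0]

lemma continuous_dE (E : Set ℂ) : Continuous (dE E) := Metric.continuous_infDist_pt E

lemma dE_nonneg (E : Set ℂ) (z : ℂ) : 0 ≤ dE E z := Metric.infDist_nonneg

lemma dE_le_add (E : Set ℂ) (z w : ℂ) : dE E w ≤ dE E z + ‖z - w‖ := by
  have := Metric.infDist_le_infDist_add_dist (s := E) (x := w) (y := z)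
  rwa [dist_comm, dist_eq_norm] at this

lemma dE_pos {E : Set ℂ} (hE : IsClosed E) (hne : E.Nonempty) {z : ℂ} (hz : z ∉ E) :
    0 < dE E z := (hE.notMem_iff_infDist_pos hne).1 hz

lemma cpt_mem_compArc_of_abs_sub_lt {E : Set ℂ} {ζ : ℂ} {θ φ : ℝ}
    (hθ : cpt θ ∈ compArc E ζ) (h : |θ - φ| < dE E (cpt θ)) : cpt φ ∈ compArc E ζ := by
  have hsub : cpt '' Metric.ball θ (dE E (cpt θ)) ⊆ circleT \ E := by
    rintro _ ⟨x, hx, rfl⟩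
    refine ⟨cpt_mem_circleT x, fun hxE => ?_⟩
    have h1 : dE E (cpt θ) ≤ dist (cpt θ) (cpt x) := Metric.infDist_le_dist_of_mem hxE
    have h2 := norm_cpt_sub_cpt_le θ x
    rw [Metric.mem_ball, dist_comm, Real.dist_eq] at hx
    rw [dist_eq_norm] at h1
    linarith
  have hpre : IsPreconnected (cpt '' Metric.ball θ (dE E (cpt θ))) :=
    (convex_ball θ _).isPreconnected.image _ continuous_cpt.continuousOn
  have hpos : 0 < dE E (cpt θ) := lt_of_le_of_lt (abs_nonneg _) h
  have := hpre.subset_connectedComponentIn (mem_image_of_mem _ (Metric.mem_ball_self hpos)) hsub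
  unfold compArc at *
  rw [connectedComponentIn_eq hθ]
  exact this (mem_image_of_mem _ (by rwa [Metric.mem_ball, dist_comm, Real.dist_eq]))

lemma isOpen_preimage_compArc {E : Set ℂ} (hE : IsClosed E) (hne : E.Nonempty) (ζ : ℂ) :
    IsOpen (cpt ⁻¹' compArc E ζ) := by
  rw [Metric.isOpen_iff]
  intro θ hθ
  refine ⟨dE E (cpt θ), dE_pos hE hne (connectedComponentIn_subset _ _ hθ).2, fun φ hφ => ?_⟩
  rw [Metric.mem_ball, dist_comm, Real.dist_eq] at hφ
  exact cpt_mem_compArc_of_abs_sub_lt hθ hφ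

lemma half_dE_le_norm_sub {E : Set ℂ} {ζ z : ℂ} (hζ : ζ ∈ circleT \ E) (hz : z ∈ circleT)
    (h : z ∉ compArc E ζ) : dE E ζ / 2 ≤ ‖ζ - z‖ := by
  obtain ⟨t, -, rfl⟩ := exists_cpt_eq hζ.1 0
  obtain ⟨φ, hφ, rfl⟩ := exists_cpt_eq hz t
  refine le_trans ?_ (half_abs_sub_le_norm_cpt_sub_cpt hφ)
  by_contra! hlt
  exact h (cpt_mem_compArc_of_abs_sub_lt (mem_connectedComponentIn hζ) (by linarith))

lemma exists_adjacent_args {E : Set ℂ} (hE : IsClosed E) (hsub : E ⊆ circleT)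
    (hne : E.Nonempty) {t : ℝ} (ht : cpt t ∉ E) :
    ∃ p q, p < t ∧ t < q ∧ cpt p ∈ E ∧ cpt q ∈ E ∧ ∀ φ ∈ Ioo p q, cpt φ ∉ E := by
  obtain ⟨e, he⟩ := hne
  obtain ⟨φ, hφ, rfl⟩ := exists_cpt_eq (hsub he) t
  rw [abs_le] at hφ
  have hcl : IsClosed (cpt ⁻¹' E) := hE.preimage continuous_cpt
  have hplus : cpt (φ + 2 * π) ∈ E := by rwa [cpt_periodic]
  have hminus : cpt (φ - 2 * π) ∈ E := by rwa [cpt_periodic.sub_eq]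
  have hpi := pi_pos
  have hbA : BddAbove (cpt ⁻¹' E ∩ Iic t) := ⟨t, fun x hx => hx.2⟩
  have hbB : BddBelow (cpt ⁻¹' E ∩ Ici t) := ⟨t, fun x hx => hx.2⟩
  have hA := (hcl.inter isClosed_Iic).csSup_mem (s := cpt ⁻¹' E ∩ Iic t)
    ⟨φ - 2 * π, hminus, by simp only [mem_Iic]; linarith⟩ hbA
  have hB := (hcl.inter isClosed_Ici).csInf_mem (s := cpt ⁻¹' E ∩ Ici t)
    ⟨φ + 2 * π, hplus, by simp only [mem_Ici]; linarith⟩ hbB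
  refine ⟨_, _, lt_of_le_of_ne hA.2 ?_, lt_of_le_of_ne hB.2 ?_, hA.1, hB.1, fun x hx hxE => ?_⟩
  · intro h
    exact ht (h ▸ hA.1)
  · intro h
    have := hB.1
    rw [← h] at this
    exact ht this
  · rcases le_total x t with h | h
    · exact (lt_irrefl x) (lt_of_le_of_lt (le_csSup hbA ⟨hxE, h⟩) hx.1)
    · exact (lt_irrefl x) (lt_of_lt_of_le hx.2 (csInf_le hbB ⟨hxE, h⟩))

lemma mem_Ioo_of_cpt_mem_compArc {E : Set ℂ} {p q t θ : ℝ} (hp : p < t) (hq : t < q)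
    (hpE : cpt p ∈ E) (hqE : cpt q ∈ E) (hpq : ∀ φ ∈ Ioo p q, cpt φ ∉ E)
    (hθ : θ ∈ Ioc p (p + 2 * π)) (hmem : cpt θ ∈ compArc E (cpt t)) : θ ∈ Ioo p q := by
  have hpi := pi_pos
  have hq' : q ≤ p + 2 * π := by
    by_contra! h
    exact hpq (p + 2 * π) ⟨by linarith, h⟩ (by rwa [cpt_periodic])
  have hθ' : θ < p + 2 * π := by
    refine lt_of_le_of_ne hθ.2 fun h => (connectedComponentIn_subset _ _ hmem).2 ?_
    rwa [h, cpt_periodic]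
  have hzero (x : ℝ) : cpt x ≠ 0 := by simp [cpt]
  set A : ℂ → ℝ := fun z => (z / cpt (p + π)).arg + (p + π) with hA
  have hAcpt : ∀ x ∈ Ioo p (p + 2 * π), A (cpt x) = x := by
    intro x hx
    have h1 : cpt x / cpt (p + π) = cpt (x - (p + π)) := by
      rw [div_eq_iff (hzero _), ← cpt_add, sub_add_cancel]
    simp only [hA, h1]
    rw [cpt, Complex.arg_exp_mul_I, toIocMod_eq_self _ |>.2]
    · ring
    · constructor <;> linarith [hx.1, hx.2]
  have hcptA : ∀ z ∈ circleT, cpt (A z) = z := by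
    intro z hz
    have hz : ‖z‖ = 1 := by simpa [circleT] using hz
    simp only [hA]
    rw [cpt_add, cpt_arg_div (by rw [norm_div, hz, norm_cpt, div_one]), div_mul_cancel₀ _ (hzero _)]
  have hcont : ContinuousOn A (compArc E (cpt t)) := by
    intro z hz
    have hzT := connectedComponentIn_subset _ _ hz
    refine ContinuousAt.continuousWithinAt ?_
    refine ContinuousAt.add (ContinuousAt.comp (f := fun z => z / cpt (p + π))
      (Complex.continuousAt_arg ?_) (by fun_prop)) continuousAt_const
    rw [Complex.mem_slitPlane_iff_arg]
    have hz1 : ‖z‖ = 1 := by simpa [circleT] using hzT.1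
    refine ⟨fun harg => hzT.2 ?_, div_ne_zero (by rintro rfl; simp at hz1) (hzero _)⟩
    have : A z = p + 2 * π := by simp only [hA, harg]; ring
    rw [← hcptA z hzT.1, this, cpt_periodic]
    exact hpE
  have hord : OrdConnected (A '' compArc E (cpt t)) :=
    (isPreconnected_connectedComponentIn.image A hcont).ordConnected
  refine ⟨hθ.1, ?_⟩
  by_contra! h
  have ht : cpt t ∈ compArc E (cpt t) :=
    mem_connectedComponentIn ⟨cpt_mem_circleT t, hpq t ⟨hp, hq⟩⟩
  obtain ⟨z, hz, hzq⟩ := hord.out ⟨_, ht, hAcpt t ⟨hp, by linarith⟩⟩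
    ⟨_, hmem, hAcpt θ ⟨hθ.1, hθ'⟩⟩ ⟨hq.le, h⟩
  have hzT := connectedComponentIn_subset _ _ hz
  exact hzT.2 (by rw [← hcptA z hzT.1, hzq]; exact hqE)

lemma mul_min_le_dE {E : Set ℂ} (hE : IsClosed E) (hsub : E ⊆ circleT) (hne : E.Nonempty)
    {p q θ : ℝ} (hpq : ∀ φ ∈ Ioo p q, cpt φ ∉ E) (hθ : θ ∈ Ioo p q) :
    2 / π * min |θ - p| |θ - q| ≤ dE E (cpt θ) := by
  obtain ⟨e, he, hdist⟩ := hE.exists_infDist_eq_dist hne (cpt θ)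
  obtain ⟨φ, hφ, rfl⟩ := exists_cpt_eq (hsub he) θ
  rw [dE, hdist, dist_eq_norm]
  refine le_trans ?_ (mul_abs_sub_le_norm_cpt_sub_cpt hφ)
  have := pi_pos
  gcongr
  rcases le_or_gt φ p with h | h
  · refine (min_le_left _ _).trans ?_
    rw [abs_of_pos (by linarith [hθ.1]), abs_of_pos (by linarith [hθ.1])]
    linarith
  · have h' : q ≤ φ := by
      by_contra! h'
      exact hpq φ ⟨h, h'⟩ he
    refine (min_le_right _ _).trans ?_
    rw [abs_of_neg (by linarith [hθ.2]), abs_of_neg (by linarith [hθ.2])]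
    linarith

/-- The profile `x ↦ x^{2α} - 1 - 2α log x` of the Richter–Sundberg integrand. -/
noncomputable def rsProfile (α x : ℝ) : ℝ := x ^ (2 * α) - 1 - 2 * α * Real.log x

lemma rsProfile_eq {α x : ℝ} (hx : 0 < x) :
    rsProfile α x = Real.exp (2 * α * Real.log x) - 1 - 2 * α * Real.log x := by
  rw [rsProfile, Real.rpow_def_of_pos hx, mul_comm (Real.log x)]

lemma rsProfile_nonneg {α x : ℝ} (hx : 0 < x) : 0 ≤ rsProfile α x := by
  rw [rsProfile_eq hx]
  linarith [Real.add_one_le_exp (2 * α * Real.log x)]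

lemma RSker_rpow_eq {α : ℝ} {E : Set ℂ} {ζ z : ℂ} (hζ : 0 < dE E ζ) (hz : 0 < dE E z) :
    RSker (fun t => t ^ α) E ζ z =
      dE E ζ ^ (2 * α) * (rsProfile α (dE E z / dE E ζ) / ‖ζ - z‖ ^ 2) := by
  have h : ∀ t : ℝ, 0 < t → (t ^ α) ^ 2 = t ^ (2 * α) := fun t ht => by
    rw [← Real.rpow_natCast, ← Real.rpow_mul ht.le, mul_comm]; norm_num
  have hp : 0 < dE E ζ ^ (2 * α) := Real.rpow_pos_of_pos hζ _
  simp only [RSker, rsProfile]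
  rw [h _ hζ, h _ hz, ← Real.div_rpow hz.le hζ.le, Real.log_rpow (div_pos hz hζ),
    Real.div_rpow hz.le hζ.le]
  field_simp

lemma rsProfile_le_sq {α x : ℝ} (hα : α ∈ Ioo (0 : ℝ) (1 / 2)) (hx : |x - 1| ≤ 1 / 2) :
    rsProfile α x ≤ 4 * (x - 1) ^ 2 := by
  have hx' := abs_le.1 hx
  have hx0 : 0 < x := by linarith
  have hlog : |Real.log x| ≤ 2 * |x - 1| := by
    have h1 := Real.log_le_sub_one_of_pos hx0
    have h2 := Real.one_sub_inv_le_log_of_pos hx0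
    have h3 : -(2 * |x - 1|) ≤ 1 - x⁻¹ := by
      have : 1 - x⁻¹ = (x - 1) / x := by field_simp
      rw [this, le_div_iff₀ hx0]
      rcases abs_cases (x - 1) with ⟨h, h'⟩ | ⟨h, h'⟩ <;> rw [h] <;> nlinarith
    rw [abs_le]
    exact ⟨by linarith, by linarith [le_abs_self (x - 1), abs_nonneg (x - 1)]⟩
  have hs : |2 * α * Real.log x| ≤ 2 * |x - 1| := by
    rw [abs_mul, abs_of_pos (by linarith [hα.1])]
    nlinarith [hα.1, hα.2, abs_nonneg (Real.log x)]
  rw [rsProfile_eq hx0]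
  refine (le_abs_self _).trans ((Real.abs_exp_sub_one_sub_id_le (by linarith)).trans ?_)
  rw [← sq_abs, ← sq_abs (x - 1)]
  nlinarith [abs_nonneg (2 * α * Real.log x)]

lemma rsProfile_le {α x : ℝ} (hα : α ∈ Ioo (0 : ℝ) (1 / 2)) :
    rsProfile α x ≤ x ^ (2 * α) + posLog x⁻¹ := by
  have h1 : -Real.log x ≤ posLog x⁻¹ := by
    rw [← Real.log_inv]; exact le_max_right _ _
  have h2 : 0 ≤ posLog x⁻¹ := posLog_nonneg
  unfold rsProfile
  nlinarith [hα.1, hα.2]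

lemma exists_mul_log_le_rsProfile {α : ℝ} (hα : α ∈ Ioo (0 : ℝ) (1 / 2)) :
    ∃ c > 0, ∀ x, 0 < x → x ≤ 1 / 2 → c * Real.log x⁻¹ ≤ rsProfile α x := by
  have hl2 : 0 < Real.log 2 := Real.log_pos one_lt_two
  have hl2' : Real.log 2 ≤ 1 := by linarith [Real.log_two_lt_d9]
  have hs0 : 0 < 2 * α * Real.log 2 := by have := hα.1; positivity
  refine ⟨2 * α * Real.log 2 / 4 * (2 * α), by have := hα.1; positivity, fun x hx hx2 => ?_⟩
  have hlog : Real.log 2 ≤ Real.log x⁻¹ := by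
    refine Real.log_le_log two_pos ?_
    rw [le_inv_comm₀ two_pos hx]; linarith
  rw [rsProfile_eq hx]
  obtain ⟨s, hs⟩ : ∃ s, s = 2 * α * Real.log x⁻¹ := ⟨_, rfl⟩
  have hs' : 2 * α * Real.log x = -s := by rw [hs, Real.log_inv]; ring
  rw [hs', mul_assoc, ← hs]
  have hle : 2 * α * Real.log 2 ≤ s := by
    rw [hs]
    exact mul_le_mul_of_nonneg_left hlog (by linarith [hα.1])
  have hle1 : 2 * α * Real.log 2 ≤ 1 := by nlinarith [hα.1, hα.2]
  rcases le_total s 2 with h | h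
  · have h1 : (1 - s / 2) ^ 2 ≤ Real.exp (-s) := by
      have : Real.exp (-s) = Real.exp (-s / 2) ^ 2 := by
        rw [← Real.exp_nat_mul]; congr 1; push_cast; ring
      rw [this]
      have := Real.add_one_le_exp (-s / 2)
      exact pow_le_pow_left₀ (by linarith) (by linarith) 2
    nlinarith
  · nlinarith [Real.exp_pos (-s)]

lemma rpow_le_tail {β δ r u : ℝ} (hβ : -2 ≤ β) (hβ' : β ≤ 0) (hδ : 0 < δ) (hr : δ / 2 ≤ r)
    (hu : |u| ≤ 2 * r) : (r / δ) ^ β ≤ 16 * (1 + |u / δ|) ^ β := by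
  have hr0 : 0 < r := by linarith
  have h1 : 1 + |u / δ| ≤ 4 * (r / δ) := by
    rw [abs_div, abs_of_pos hδ]
    have : 1 + |u| / δ = (δ + |u|) / δ := by field_simp
    rw [this, ← mul_div_assoc]
    gcongr
    linarith
  have h2 : (4 * (r / δ)) ^ β ≤ (1 + |u / δ|) ^ β :=
    Real.rpow_le_rpow_of_nonpos (by positivity) h1 hβ'
  have h3 : (1 / 16 : ℝ) ≤ 4 ^ β := by
    calc (1 / 16 : ℝ) = 4 ^ (-2 : ℝ) := by
          rw [Real.rpow_neg (by norm_num)]; norm_num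
      _ ≤ 4 ^ β := Real.rpow_le_rpow_of_exponent_le (by norm_num) hβ
  rw [Real.mul_rpow (by norm_num) (by positivity)] at h2
  have h4 : 0 ≤ (r / δ) ^ β := by positivity
  nlinarith

lemma inv_sq_le_tail {β δ r u : ℝ} (hβ : -2 ≤ β) (hδ : 0 < δ) (hr : δ / 2 ≤ r)
    (hu : |u| ≤ 2 * r) : 1 / r ^ 2 ≤ 16 / δ ^ 2 * (1 + |u / δ|) ^ β := by
  have hr0 : 0 < r := by linarith
  have h1 := rpow_le_tail le_rfl (by norm_num) hδ hr hu
  have h2 : (1 + |u / δ|) ^ (-2 : ℝ) ≤ (1 + |u / δ|) ^ β :=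
    Real.rpow_le_rpow_of_exponent_le (by linarith [abs_nonneg (u / δ)]) hβ
  have h3 : 1 / r ^ 2 = (r / δ) ^ (-2 : ℝ) / δ ^ 2 := by
    rw [Real.rpow_neg (by positivity)]
    norm_num
    field_simp
  rw [h3, div_mul_eq_mul_div]
  gcongr
  linarith

lemma rsProfile_div_sq_le {α δ d r u : ℝ} (hα : α ∈ Ioo (0 : ℝ) (1 / 2)) (hδ : 0 < δ)
    (hd : 0 ≤ d) (hr : 0 ≤ r) (hdr : |d - δ| ≤ r) (hu : |u| ≤ 2 * r) :
    rsProfile α (d / δ) / r ^ 2 ≤ 64 / δ ^ 2 * (1 + |u / δ|) ^ (2 * α - 2) +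
      if δ / 2 ≤ r then posLog (δ / d) / r ^ 2 else 0 := by
  have hβ : -2 ≤ 2 * α - 2 := by linarith [hα.1]
  have hβ' : 2 * α - 2 ≤ 0 := by linarith [hα.2]
  have hx : |d / δ - 1| ≤ r / δ := by
    have : d / δ - 1 = (d - δ) / δ := by field_simp
    rw [this, abs_div, abs_of_pos hδ]
    gcongr
  split_ifs with h
  · have hr0 : 0 < r := by linarith
    have hρ : 1 / 2 ≤ r / δ := by rw [le_div_iff₀ hδ]; linarith
    have h1 : (d / δ) ^ (2 * α) ≤ 3 * (r / δ) ^ (2 * α) := by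
      calc (d / δ) ^ (2 * α) ≤ (3 * (r / δ)) ^ (2 * α) := by
            refine Real.rpow_le_rpow (by positivity) ?_ (by linarith [hα.1])
            linarith [(abs_le.1 hx).2]
        _ = 3 ^ (2 * α) * (r / δ) ^ (2 * α) := Real.mul_rpow (by norm_num) (by positivity)
        _ ≤ 3 * (r / δ) ^ (2 * α) := by
            gcongr
            calc (3 : ℝ) ^ (2 * α) ≤ 3 ^ (1 : ℝ) :=
                  Real.rpow_le_rpow_of_exponent_le (by norm_num) (by linarith [hα.2])
              _ = 3 := Real.rpow_one 3
    have h2 : (r / δ) ^ (2 * α) / r ^ 2 = (r / δ) ^ (2 * α - 2) / δ ^ 2 := by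
      rw [Real.rpow_sub (by positivity)]
      norm_num
      field_simp
    have h3 := rpow_le_tail hβ hβ' hδ h hu
    have h4 := rsProfile_le (x := d / δ) hα
    rw [inv_div] at h4
    have h5 : 0 ≤ (1 + |u / δ|) ^ (2 * α - 2) := by positivity
    calc rsProfile α (d / δ) / r ^ 2 ≤ (3 * (r / δ) ^ (2 * α) + posLog (δ / d)) / r ^ 2 := by
          gcongr; linarith
      _ = 3 * ((r / δ) ^ (2 * α) / r ^ 2) + posLog (δ / d) / r ^ 2 := by ring
      _ ≤ _ := by
          rw [h2, ← mul_div_assoc, div_mul_eq_mul_div]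
          have h6 : 3 * (r / δ) ^ (2 * α - 2) ≤ 64 * (1 + |u / δ|) ^ (2 * α - 2) := by linarith
          gcongr
  · push Not at h
    have hρ : r / δ ≤ 1 / 2 := by rw [div_le_iff₀ hδ]; linarith
    have h1 := rsProfile_le_sq hα (hx.trans hρ)
    have h2 : (d / δ - 1) ^ 2 ≤ (r / δ) ^ 2 := by
      rw [← sq_abs]; exact pow_le_pow_left₀ (abs_nonneg _) hx 2
    have h3 : 1 + |u / δ| ≤ 2 := by
      rw [abs_div, abs_of_pos hδ]
      have : |u| / δ ≤ 1 := by rw [div_le_one hδ]; linarith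
      linarith
    have h4 : (1 / 4 : ℝ) ≤ (1 + |u / δ|) ^ (2 * α - 2) := by
      calc (1 / 4 : ℝ) = 2 ^ (-2 : ℝ) := by
            rw [Real.rpow_neg (by norm_num)]; norm_num
        _ ≤ 2 ^ (2 * α - 2) := Real.rpow_le_rpow_of_exponent_le (by norm_num) hβ
        _ ≤ _ := Real.rpow_le_rpow_of_nonpos (by positivity) h3 hβ'
    have h5 : rsProfile α (d / δ) / r ^ 2 ≤ 4 / δ ^ 2 := by
      rcases hr.eq_or_lt with h0 | h0
      · rw [← h0]; simp; positivity
      · rw [div_le_iff₀ (by positivity)]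
        calc rsProfile α (d / δ) ≤ 4 * (r / δ) ^ 2 := by linarith
          _ = 4 / δ ^ 2 * r ^ 2 := by rw [div_pow]; ring
    have h6 : 0 < 64 / δ ^ 2 := by positivity
    have h7 : 4 / δ ^ 2 = 64 / δ ^ 2 * (1 / 16) := by ring
    rw [h7] at h5
    nlinarith

/-- The dominating profile for `log⁺ (dist(ζ,E) / dist(·,E))` near an endpoint of the arc. -/
noncomputable def endpointLog (v : ℝ) : ℝ := posLog (2 / π * |v|)⁻¹

lemma endpointLog_nonneg (v : ℝ) : 0 ≤ endpointLog v := posLog_nonneg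

lemma integrable_endpointLog : Integrable endpointLog := by
  have hpi := pi_pos
  have hI : IntegrableOn (fun v : ℝ => |Real.log (2 / π)| + |Real.log v|) (Ioc (-2) 2) := by
    refine Integrable.add (integrable_const _) ?_
    exact ((intervalIntegrable_iff_integrableOn_Ioc_of_le (by norm_num)).1
      (intervalIntegral.intervalIntegrable_log' (a := -2) (b := 2))).abs
  have hmeas : Measurable endpointLog := by
    unfold endpointLog
    exact continuous_posLog.measurable.comp (by fun_prop)
  refine ((integrable_indicator_iff measurableSet_Ioc).2 hI).mono' hmeas.aestronglyMeasurable
    (Filter.Eventually.of_forall fun v => ?_)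
  rw [Real.norm_of_nonneg (endpointLog_nonneg v)]
  by_cases hv : v ∈ Ioc (-2 : ℝ) 2
  · rw [indicator_of_mem hv, endpointLog]
    rcases eq_or_ne v 0 with rfl | h0
    · simp
    · refine max_le (by positivity) ?_
      rw [Real.log_inv, Real.log_mul (by positivity) (by positivity), Real.log_abs]
      linarith [neg_abs_le (Real.log (2 / π)), neg_abs_le (Real.log v)]
  · rw [indicator_of_notMem hv, endpointLog]
    refine le_of_eq ((posLog_eq_zero_iff _).2 ?_)
    have h2 : 2 ≤ |v| := by
      by_contra! h
      exact hv ⟨(abs_lt.1 h).1, (abs_lt.1 h).2.le⟩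
    rw [abs_of_nonneg (by positivity)]
    refine inv_le_one_of_one_le₀ ?_
    rw [div_mul_eq_mul_div, le_div_iff₀ hpi]
    linarith [pi_le_four]

lemma integrable_comp_sub_div {f : ℝ → ℝ} (hf : Integrable f) (a : ℝ) {δ : ℝ} (hδ : 0 < δ) :
    Integrable (fun θ => f ((θ - a) / δ)) :=
  (hf.comp_div hδ.ne').comp_sub_right a

lemma setIntegral_comp_sub_div_le {f : ℝ → ℝ} (hf : Integrable f) (h0 : ∀ v, 0 ≤ f v) (a : ℝ)
    {δ : ℝ} (hδ : 0 < δ) (s : Set ℝ) : ∫ θ in s, f ((θ - a) / δ) ≤ δ * ∫ v, f v := by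
  refine (setIntegral_le_integral (integrable_comp_sub_div hf a hδ)
    (Filter.Eventually.of_forall fun _ => h0 _)).trans (le_of_eq ?_)
  rw [integral_sub_right_eq_self (fun θ => f (θ / δ)), Measure.integral_comp_div, abs_of_pos hδ,
    smul_eq_mul]

lemma integrable_one_add_abs_rpow {α : ℝ} (hα : α < 1 / 2) :
    Integrable (fun v : ℝ => (1 + |v|) ^ (2 * α - 2)) := by
  have := integrable_one_add_norm (E := ℝ) (μ := volume) (r := 2 - 2 * α)
    (by rw [Module.finrank_self]; push_cast; linarith)
  simpa using this

lemma circInt_eq (f : ℂ → ℝ) (a : ℝ) :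
    circInt f = ∫ θ in Ioc a (a + 2 * π), f (cpt θ) := by
  have hpi := two_pi_pos
  have := (cpt_periodic.comp f).intervalIntegral_add_eq 0 a
  rw [zero_add, intervalIntegral.integral_of_le hpi.le,
    intervalIntegral.integral_of_le (by linarith)] at this
  exact this

lemma circIntOn_eq {Λ : Set ℂ} (hΛ : MeasurableSet (cpt ⁻¹' Λ)) (f : ℂ → ℝ) :
    circIntOn Λ f = circInt (Λ.indicator f) := by
  have : {θ ∈ Ioc 0 (2 * π) | cpt θ ∈ Λ} = Ioc 0 (2 * π) ∩ cpt ⁻¹' Λ := rfl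
  rw [circIntOn, circInt, this, ← setIntegral_indicator hΛ]
  rfl

lemma CarlesonSet.integrableOn_log {E : Set ℂ} (h : CarlesonSet E) (a : ℝ) :
    IntegrableOn (fun θ => Real.log (dE E (cpt θ))) (Ioc a (a + 2 * π)) := by
  have hpi := two_pi_pos
  have h0 : IntervalIntegrable (fun θ => Real.log (dE E (cpt θ))) volume 0 (0 + 2 * π) := by
    rw [zero_add, intervalIntegrable_iff_integrableOn_Ioc_of_le hpi.le]
    exact h
  have := (cpt_periodic.comp fun z => Real.log (dE E z)).intervalIntegrable hpi.ne' h0 a (a + 2 * π)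
  rwa [intervalIntegrable_iff_integrableOn_Ioc_of_le (by linarith)] at this

lemma MeasureZeroOnCircle.ae_notMem {E : Set ℂ} (h : MeasureZeroOnCircle E) :
    ∀ᵐ θ : ℝ, cpt θ ∉ E := by
  have hcover : {θ | ¬ cpt θ ∉ E} ⊆
      ⋃ n : ℤ, (fun θ => θ + n • (2 * π)) ⁻¹' {θ ∈ Ioc 0 (2 * π) | cpt θ ∈ E} := by
    intro θ hθ
    obtain ⟨n, hn, -⟩ := existsUnique_add_zsmul_mem_Ioc two_pi_pos θ 0
    rw [zero_add] at hn
    refine mem_iUnion.2 ⟨n, hn, ?_⟩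
    rw [cpt_periodic.zsmul n θ]
    exact not_not.1 hθ
  refine measure_mono_null hcover (measure_iUnion_null fun n => ?_)
  rw [measure_preimage_add_right]
  exact h

lemma measurable_dE_cpt (E : Set ℂ) : Measurable fun θ => dE E (cpt θ) :=
  ((continuous_dE E).comp continuous_cpt).measurable

lemma measurableSet_preimage_compArc {E : Set ℂ} (hE : IsClosed E) (hne : E.Nonempty) (ζ : ℂ) :
    MeasurableSet (cpt ⁻¹' compArc E ζ) :=
  (isOpen_preimage_compArc hE hne ζ).measurableSet

lemma measurableSet_preimage_GammaSet {E : Set ℂ} (hE : IsClosed E) (hne : E.Nonempty) (ζ : ℂ) :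
    MeasurableSet (cpt ⁻¹' GammaSet E ζ) := by
  have : cpt ⁻¹' GammaSet E ζ = (cpt ⁻¹' compArc E ζ)ᶜ ∩ {θ | dE E (cpt θ) ≤ dE E ζ} := by
    ext θ
    simp [GammaSet, cpt_mem_circleT]
  rw [this]
  exact (measurableSet_preimage_compArc hE hne ζ).compl.inter
    (measurableSet_le (measurable_dE_cpt E) measurable_const)

lemma abs_log_div_le (a b : ℝ) : |Real.log (a / b)| ≤ |Real.log a| + |Real.log b| := by
  rcases eq_or_ne a 0 with rfl | ha
  · simp
  rcases eq_or_ne b 0 with rfl | hb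
  · simp
  rw [Real.log_div ha hb]
  exact abs_sub _ _

/-- The contribution of the complementary arc of `ζ` to the logarithmic integral. -/
noncomputable def arcLog (E : Set ℂ) (ζ : ℂ) : ℂ → ℝ :=
  (compArc E ζ).indicator fun z => posLog (dE E ζ / dE E z)

/-- The integrand of the `𝓛₁` condition, extended by zero outside `Γ(ζ,E)`. -/
noncomputable def gammaLog (E : Set ℂ) (ζ : ℂ) : ℂ → ℝ :=
  (GammaSet E ζ).indicator fun z => Real.log (dE E ζ / dE E z) / ‖ζ - z‖ ^ 2

lemma arcLog_nonneg (E : Set ℂ) (ζ z : ℂ) : 0 ≤ arcLog E ζ z :=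
  indicator_nonneg (fun _ _ => posLog_nonneg) z

lemma log_div_nonneg_of_mem_GammaSet {E : Set ℂ} {ζ z : ℂ} (h : z ∈ GammaSet E ζ) :
    0 ≤ Real.log (dE E ζ / dE E z) := by
  rcases (dE_nonneg E z).eq_or_lt with h0 | h0
  · simp [← h0]
  · exact Real.log_nonneg ((one_le_div h0).2 h.2)

lemma gammaLog_nonneg (E : Set ℂ) (ζ z : ℂ) : 0 ≤ gammaLog E ζ z :=
  indicator_nonneg (fun _ h => div_nonneg (log_div_nonneg_of_mem_GammaSet h) (by positivity)) z

section Integrability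

variable {E : Set ℂ} {ζ : ℂ}

lemma integrableOn_arcLog (hE : IsClosed E) (hne : E.Nonempty) (hcar : CarlesonSet E) (a : ℝ) :
    IntegrableOn (fun θ => arcLog E ζ (cpt θ)) (Ioc a (a + 2 * π)) := by
  have hmeas : Measurable fun θ => arcLog E ζ (cpt θ) :=
    Measurable.indicator (s := cpt ⁻¹' compArc E ζ) (continuous_posLog.measurable.comp
      (measurable_const.div (measurable_dE_cpt E))) (measurableSet_preimage_compArc hE hne ζ)
  refine ((integrable_const |Real.log (dE E ζ)|).add (hcar.integrableOn_log a).abs).mono'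
    hmeas.aestronglyMeasurable (Filter.Eventually.of_forall fun θ => ?_)
  rw [Real.norm_of_nonneg (arcLog_nonneg _ _ _)]
  refine indicator_apply_le' (fun _ => ?_) (fun _ => ?_)
  · simp only [Pi.add_apply]
    exact max_le (by positivity) ((le_abs_self _).trans (abs_log_div_le _ _))
  · simp only [Pi.add_apply]
    positivity

lemma integrableOn_gammaLog (hE : IsClosed E) (hne : E.Nonempty) (hcar : CarlesonSet E)
    (hζ : ζ ∈ circleT \ E) (a : ℝ) :
    IntegrableOn (fun θ => gammaLog E ζ (cpt θ)) (Ioc a (a + 2 * π)) := by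
  have hδ := dE_pos hE hne hζ.2
  have hmeas : Measurable fun θ => gammaLog E ζ (cpt θ) := by
    refine Measurable.indicator (s := cpt ⁻¹' GammaSet E ζ) (Measurable.div
      (Real.measurable_log.comp (measurable_const.div (measurable_dE_cpt E))) ?_)
      (measurableSet_preimage_GammaSet hE hne ζ)
    exact ((continuous_const.sub continuous_cpt).norm.pow 2).measurable
  refine (((integrable_const |Real.log (dE E ζ)|).add
    (hcar.integrableOn_log a).abs).div_const ((dE E ζ / 2) ^ 2)).mono'
    hmeas.aestronglyMeasurable (Filter.Eventually.of_forall fun θ => ?_)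
  rw [Real.norm_of_nonneg (gammaLog_nonneg _ _ _)]
  refine indicator_apply_le' (fun h => ?_) (fun _ => ?_)
  · have := half_dE_le_norm_sub hζ h.1.1 h.1.2
    simp only [Pi.add_apply]
    gcongr
    exact (le_abs_self _).trans (abs_log_div_le _ _)
  · simp only [Pi.add_apply]
    positivity

/-- The Richter–Sundberg integrand of `t ↦ t^α` divided by `dist(ζ,E)^{2α}`. -/
noncomputable def normKer (α : ℝ) (E : Set ℂ) (ζ z : ℂ) : ℝ :=
  rsProfile α (dE E z / dE E ζ) / ‖ζ - z‖ ^ 2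

lemma normKer_le {α t θ : ℝ} (hα : α ∈ Ioo (0 : ℝ) (1 / 2)) (hE : IsClosed E)
    (hne : E.Nonempty) (ht : cpt t ∉ E) (hθ : |t - θ| ≤ π) :
    normKer α E (cpt t) (cpt θ) ≤
      64 / dE E (cpt t) ^ 2 * (1 + |(θ - t) / dE E (cpt t)|) ^ (2 * α - 2) +
      4 / dE E (cpt t) ^ 2 * arcLog E (cpt t) (cpt θ) + gammaLog E (cpt t) (cpt θ) := by
  have hδ := dE_pos hE hne ht
  have hu : |θ - t| ≤ 2 * ‖cpt t - cpt θ‖ := by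
    rw [abs_sub_comm]
    linarith [half_abs_sub_le_norm_cpt_sub_cpt hθ]
  have hdr : |dE E (cpt θ) - dE E (cpt t)| ≤ ‖cpt t - cpt θ‖ := by
    have h1 := dE_le_add E (cpt t) (cpt θ)
    have h2 := dE_le_add E (cpt θ) (cpt t)
    rw [norm_sub_rev] at h2
    rw [abs_le]
    constructor <;> linarith
  refine (rsProfile_div_sq_le hα hδ (dE_nonneg E _) (norm_nonneg _) hdr hu).trans ?_
  rw [add_assoc]
  gcongr
  have hA := arcLog_nonneg E (cpt t) (cpt θ)
  have hG := gammaLog_nonneg E (cpt t) (cpt θ)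
  split_ifs with h
  · by_cases hI : cpt θ ∈ compArc E (cpt t)
    · have h1 : posLog (dE E (cpt t) / dE E (cpt θ)) / ‖cpt t - cpt θ‖ ^ 2 ≤
          posLog (dE E (cpt t) / dE E (cpt θ)) / (dE E (cpt t) / 2) ^ 2 := by
        have := posLog_nonneg (x := dE E (cpt t) / dE E (cpt θ))
        gcongr
      refine (h1.trans (le_of_eq ?_)).trans (le_add_of_nonneg_right hG)
      rw [arcLog, indicator_of_mem hI]
      field_simp
      norm_num
    · refine le_trans ?_ (le_add_of_nonneg_left (by positivity))
      rcases le_or_gt (dE E (cpt θ)) (dE E (cpt t)) with hle | hlt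
      · have hmem : cpt θ ∈ GammaSet E (cpt t) := ⟨⟨cpt_mem_circleT θ, hI⟩, hle⟩
        rw [gammaLog, indicator_of_mem hmem, posLog_apply,
          max_eq_right (log_div_nonneg_of_mem_GammaSet hmem)]
      · rw [(posLog_eq_zero_iff _).2, zero_div]
        · exact hG
        · rw [abs_of_nonneg (by positivity [hδ, dE_nonneg E (cpt θ)])]
          exact div_le_one_of_le₀ hlt.le (dE_nonneg _ _)
  · positivity

lemma abs_sub_le_pi_of_mem_Ioc {t θ : ℝ} (hθ : θ ∈ Ioc (t - π) (t - π + 2 * π)) :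
    |t - θ| ≤ π := by
  rw [abs_le]
  constructor <;> linarith [hθ.1, hθ.2]

lemma ae_normKer_nonneg (α : ℝ) (hE : IsClosed E) (hne : E.Nonempty)
    (hEz : MeasureZeroOnCircle E) (hζ : ζ ∉ E) : ∀ᵐ θ : ℝ, 0 ≤ normKer α E ζ (cpt θ) := by
  filter_upwards [hEz.ae_notMem] with θ hθ
  exact div_nonneg (rsProfile_nonneg (div_pos (dE_pos hE hne hθ) (dE_pos hE hne hζ)))
    (by positivity)

lemma integrableOn_normKer {α t : ℝ} (hα : α ∈ Ioo (0 : ℝ) (1 / 2)) (hE : IsClosed E)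
    (hne : E.Nonempty) (hEz : MeasureZeroOnCircle E) (hcar : CarlesonSet E) (ht : cpt t ∉ E) :
    IntegrableOn (fun θ => normKer α E (cpt t) (cpt θ)) (Ioc (t - π) (t - π + 2 * π)) := by
  have hδ := dE_pos hE hne ht
  have hmeas : Measurable fun θ => normKer α E (cpt t) (cpt θ) := by
    have h1 : Measurable (rsProfile α) := by
      unfold rsProfile
      fun_prop
    refine Measurable.div (h1.comp ((measurable_dE_cpt E).div_const _)) ?_
    exact ((continuous_const.sub continuous_cpt).norm.pow 2).measurable
  refine ((((integrable_comp_sub_div (integrable_one_add_abs_rpow hα.2) t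
    hδ).integrableOn.const_mul (64 / dE E (cpt t) ^ 2)).add
    ((integrableOn_arcLog (ζ := cpt t) hE hne hcar _).const_mul (4 / dE E (cpt t) ^ 2))).add
    (integrableOn_gammaLog hE hne hcar ⟨cpt_mem_circleT t, ht⟩ _)).mono'
    hmeas.aestronglyMeasurable ?_
  filter_upwards [ae_restrict_of_ae (ae_normKer_nonneg α hE hne hEz ht),
    ae_restrict_mem measurableSet_Ioc] with θ h0 hθ
  rw [Real.norm_of_nonneg h0]
  exact normKer_le hα hE hne ht (abs_sub_le_pi_of_mem_Ioc hθ)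

lemma locDir_rpow_eq (α t : ℝ) (hE : IsClosed E) (hne : E.Nonempty)
    (hEz : MeasureZeroOnCircle E) (ht : cpt t ∉ E) :
    locDir (fun x => x ^ α) E (cpt t) = 1 / (2 * π) * (dE E (cpt t) ^ (2 * α) *
      ∫ θ in Ioc (t - π) (t - π + 2 * π), normKer α E (cpt t) (cpt θ)) := by
  rw [locDir, circInt_eq _ (t - π), ← integral_const_mul (dE E (cpt t) ^ (2 * α))]
  refine congrArg (1 / (2 * π) * ·) (integral_congr_ae (ae_restrict_of_ae ?_))
  filter_upwards [hEz.ae_notMem] with θ hθ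
  exact RSker_rpow_eq (dE_pos hE hne ht) (dE_pos hE hne hθ)

lemma setIntegral_arcLog_le (hE : IsClosed E) (hsub : E ⊆ circleT) (hne : E.Nonempty)
    {t : ℝ} (ht : cpt t ∉ E) (a : ℝ) :
    ∫ θ in Ioc a (a + 2 * π), arcLog E (cpt t) (cpt θ) ≤
      2 * (dE E (cpt t) * ∫ v, endpointLog v) := by
  have hδ := dE_pos hE hne ht
  have hpi := pi_pos
  obtain ⟨p, q, hp, hq, hpE, hqE, hpq⟩ := exists_adjacent_args hE hsub hne ht
  rw [← circInt_eq (arcLog E (cpt t)) a, circInt_eq _ p]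
  have hi (x : ℝ) := (integrable_comp_sub_div integrable_endpointLog x hδ).integrableOn
    (s := Ioc p (p + 2 * π))
  have hle (x : ℝ) := setIntegral_comp_sub_div_le integrable_endpointLog endpointLog_nonneg x hδ
    (Ioc p (p + 2 * π))
  calc ∫ θ in Ioc p (p + 2 * π), arcLog E (cpt t) (cpt θ)
      ≤ ∫ θ in Ioc p (p + 2 * π), (endpointLog ((θ - p) / dE E (cpt t)) +
          endpointLog ((θ - q) / dE E (cpt t))) := by
        refine integral_mono_of_nonneg (Filter.Eventually.of_forall fun θ => arcLog_nonneg _ _ _)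
          ((hi p).add (hi q)) ?_
        filter_upwards [ae_restrict_mem measurableSet_Ioc] with θ hθ
        have h1 := endpointLog_nonneg ((θ - p) / dE E (cpt t))
        have h2 := endpointLog_nonneg ((θ - q) / dE E (cpt t))
        refine indicator_apply_le' (fun hI => ?_) (fun _ => add_nonneg h1 h2)
        have hθ' := mem_Ioo_of_cpt_mem_compArc hp hq hpE hqE hpq hθ hI
        have hmin := mul_min_le_dE hE hsub hne hpq hθ'
        have key (x : ℝ) (hx : 0 < |θ - x|) (h : 2 / π * |θ - x| ≤ dE E (cpt θ)) :
            posLog (dE E (cpt t) / dE E (cpt θ)) ≤ endpointLog ((θ - x) / dE E (cpt t)) := by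
          have : (2 / π * |(θ - x) / dE E (cpt t)|)⁻¹ = dE E (cpt t) / (2 / π * |θ - x|) := by
            rw [abs_div, abs_of_pos hδ]
            field_simp
          rw [endpointLog, this]
          refine posLog_le_posLog (div_nonneg hδ.le (dE_nonneg _ _)) ?_
          gcongr
        rcases le_total |θ - p| |θ - q| with h | h
        · rw [min_eq_left h] at hmin
          linarith [key p (abs_pos.2 (by linarith [hθ'.1])) hmin]
        · rw [min_eq_right h] at hmin
          linarith [key q (abs_pos.2 (by linarith [hθ'.2])) hmin]
    _ = (∫ θ in Ioc p (p + 2 * π), endpointLog ((θ - p) / dE E (cpt t))) +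
          ∫ θ in Ioc p (p + 2 * π), endpointLog ((θ - q) / dE E (cpt t)) :=
        integral_add (hi p) (hi q)
    _ ≤ 2 * (dE E (cpt t) * ∫ v, endpointLog v) := by linarith [hle p, hle q]

lemma circIntOn_GammaSet_eq (hE : IsClosed E) (hne : E.Nonempty) (ζ : ℂ) (a : ℝ) :
    circIntOn (GammaSet E ζ) (fun z => Real.log (dE E ζ / dE E z) / ‖ζ - z‖ ^ 2) =
      ∫ θ in Ioc a (a + 2 * π), gammaLog E ζ (cpt θ) := by
  rw [circIntOn_eq (measurableSet_preimage_GammaSet hE hne ζ), circInt_eq _ a]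
  rfl

end Integrability

section Estimates

variable {α : ℝ} {E : Set ℂ}

lemma setIntegral_normKer_le (hα : α ∈ Ioo (0 : ℝ) (1 / 2)) (hE : IsClosed E)
    (hsub : E ⊆ circleT) (hne : E.Nonempty) (hEz : MeasureZeroOnCircle E)
    (hcar : CarlesonSet E) {t : ℝ} (ht : cpt t ∉ E) :
    ∫ θ in Ioc (t - π) (t - π + 2 * π), normKer α E (cpt t) (cpt θ) ≤
      (64 * (∫ v : ℝ, (1 + |v|) ^ (2 * α - 2)) + 8 * ∫ v, endpointLog v) / dE E (cpt t) +
      ∫ θ in Ioc (t - π) (t - π + 2 * π), gammaLog E (cpt t) (cpt θ) := by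
  have hδ := dE_pos hE hne ht
  have hf := integrable_one_add_abs_rpow hα.2
  have h1 := setIntegral_comp_sub_div_le hf (fun v => by positivity) t hδ
    (Ioc (t - π) (t - π + 2 * π))
  have h2 := setIntegral_arcLog_le hE hsub hne ht (t - π)
  have i1 := ((integrable_comp_sub_div hf t hδ).integrableOn
    (s := Ioc (t - π) (t - π + 2 * π))).const_mul (64 / dE E (cpt t) ^ 2)
  have i2 := (integrableOn_arcLog (ζ := cpt t) hE hne hcar (t - π)).const_mul
    (4 / dE E (cpt t) ^ 2)
  have i3 := integrableOn_gammaLog hE hne hcar ⟨cpt_mem_circleT t, ht⟩ (t - π)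
  refine (integral_mono_of_nonneg (ae_restrict_of_ae (ae_normKer_nonneg α hE hne hEz ht))
    ((i1.add i2).add i3) ?_).trans ?_
  · filter_upwards [ae_restrict_mem measurableSet_Ioc] with θ hθ
    exact normKer_le hα hE hne ht (abs_sub_le_pi_of_mem_Ioc hθ)
  · rw [integral_add' (i1.add i2) i3, integral_add' i1 i2, integral_const_mul, integral_const_mul]
    gcongr
    calc _ ≤ 64 / dE E (cpt t) ^ 2 * (dE E (cpt t) * ∫ v : ℝ, (1 + |v|) ^ (2 * α - 2)) +
          4 / dE E (cpt t) ^ 2 * (2 * (dE E (cpt t) * ∫ v, endpointLog v)) := by gcongr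
      _ = _ := by field_simp; ring

lemma exists_setIntegral_gammaLog_le (hα : α ∈ Ioo (0 : ℝ) (1 / 2)) (hE : IsClosed E)
    (hne : E.Nonempty) (hEz : MeasureZeroOnCircle E) (hcar : CarlesonSet E) :
    ∃ c > 0, ∀ t, cpt t ∉ E →
      ∫ θ in Ioc (t - π) (t - π + 2 * π), gammaLog E (cpt t) (cpt θ) ≤
        c * (∫ θ in Ioc (t - π) (t - π + 2 * π), normKer α E (cpt t) (cpt θ)) +
        16 * (∫ v : ℝ, (1 + |v|) ^ (2 * α - 2)) / dE E (cpt t) := by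
  obtain ⟨c, hc, hlog⟩ := exists_mul_log_le_rsProfile hα
  refine ⟨c⁻¹, inv_pos.2 hc, fun t ht => ?_⟩
  have hδ := dE_pos hE hne ht
  have hζ : cpt t ∈ circleT \ E := ⟨cpt_mem_circleT t, ht⟩
  have hf := integrable_one_add_abs_rpow hα.2
  have h1 := setIntegral_comp_sub_div_le hf (fun v => by positivity) t hδ
    (Ioc (t - π) (t - π + 2 * π))
  have i1 := (integrableOn_normKer hα hE hne hEz hcar ht).const_mul c⁻¹
  have i2 := ((integrable_comp_sub_div hf t hδ).integrableOn
    (s := Ioc (t - π) (t - π + 2 * π))).const_mul (16 / dE E (cpt t) ^ 2)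
  refine (integral_mono_of_nonneg (Filter.Eventually.of_forall fun θ => gammaLog_nonneg _ _ _)
    (i1.add i2) ?_).trans ?_
  · filter_upwards [ae_restrict_of_ae (ae_normKer_nonneg α hE hne hEz ht),
      ae_restrict_of_ae hEz.ae_notMem, ae_restrict_mem measurableSet_Ioc] with θ h0 hθE hθ
    have h0' : 0 ≤ c⁻¹ * normKer α E (cpt t) (cpt θ) := mul_nonneg (inv_nonneg.2 hc.le) h0
    have h2 : 0 ≤ 16 / dE E (cpt t) ^ 2 *
        (1 + |(θ - t) / dE E (cpt t)|) ^ (2 * α - 2) := by positivity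
    refine indicator_apply_le' (fun hG => ?_) (fun _ => add_nonneg h0' h2)
    have hd := dE_pos hE hne hθE
    have hr := half_dE_le_norm_sub hζ hG.1.1 hG.1.2
    have hr0 : 0 < ‖cpt t - cpt θ‖ := by linarith
    rcases le_or_gt (dE E (cpt θ) / dE E (cpt t)) (1 / 2) with h | h
    · refine le_trans (b := c⁻¹ * normKer α E (cpt t) (cpt θ)) ?_ (le_add_of_nonneg_right h2)
      have h3 := hlog _ (div_pos hd hδ) h
      rw [inv_div] at h3
      rw [normKer, ← mul_div_assoc]
      gcongr
      rwa [le_inv_mul_iff₀ hc]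
    · refine le_trans ?_ (le_add_of_nonneg_left h0')
      have hu : |θ - t| ≤ 2 * ‖cpt t - cpt θ‖ := by
        rw [abs_sub_comm]
        linarith [half_abs_sub_le_norm_cpt_sub_cpt (abs_sub_le_pi_of_mem_Ioc hθ)]
      refine le_trans ?_ (inv_sq_le_tail (by linarith [hα.1]) hδ hr hu)
      gcongr
      have h4 : dE E (cpt t) / dE E (cpt θ) ≤ 2 := by
        rw [div_le_iff₀ hd]
        rw [lt_div_iff₀ hδ] at h
        linarith
      linarith [Real.log_le_sub_one_of_pos (div_pos hδ hd)]
  · rw [integral_add' i1 i2, integral_const_mul, integral_const_mul]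
    gcongr
    calc _ ≤ 16 / dE E (cpt t) ^ 2 * (dE E (cpt t) * ∫ v : ℝ, (1 + |v|) ^ (2 * α - 2)) := by
          gcongr
      _ = _ := by field_simp

lemma exists_le_setIntegral_normKer (hα : α ∈ Ioo (0 : ℝ) (1 / 2)) (hE : IsClosed E)
    (hsub : E ⊆ circleT) (hne : E.Nonempty) (hEz : MeasureZeroOnCircle E)
    (hcar : CarlesonSet E) :
    ∃ c > 0, ∀ t, cpt t ∉ E → c / dE E (cpt t) ≤
      ∫ θ in Ioc (t - π) (t - π + 2 * π), normKer α E (cpt t) (cpt θ) := by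
  obtain ⟨c, hc, hlog⟩ := exists_mul_log_le_rsProfile hα
  have hl2 : 0 < Real.log 2 := Real.log_pos one_lt_two
  refine ⟨c * Real.log 2 / 8, by positivity, fun t ht => ?_⟩
  have hδ := dE_pos hE hne ht
  obtain ⟨e, he, hdist⟩ := hE.exists_infDist_eq_dist hne (cpt t)
  obtain ⟨φ, hφ, rfl⟩ := exists_cpt_eq (hsub he) t
  change dE E (cpt t) = _ at hdist
  rw [dist_eq_norm] at hdist
  have hδφ := norm_cpt_sub_cpt_le t φ
  obtain ⟨m, hm, hmφ⟩ : ∃ m, Ioo m (m + dE E (cpt t) / 2) ⊆ Ioc (t - π) (t - π + 2 * π) ∧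
      ∀ θ ∈ Ioo m (m + dE E (cpt t) / 2), |θ - φ| ≤ dE E (cpt t) / 2 := by
    have hφ' := abs_le.1 hφ
    rcases le_total φ t with h | h
    · rw [abs_of_nonneg (by linarith)] at hδφ
      refine ⟨φ, fun θ hθ => ⟨?_, ?_⟩, fun θ hθ => abs_le.2 ⟨?_, ?_⟩⟩ <;>
        linarith [hθ.1, hθ.2, pi_pos]
    · rw [abs_of_nonpos (by linarith)] at hδφ
      refine ⟨φ - dE E (cpt t) / 2, fun θ hθ => ⟨?_, ?_⟩, fun θ hθ => abs_le.2 ⟨?_, ?_⟩⟩ <;>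
        linarith [hθ.1, hθ.2, pi_pos]
  have hint := integrableOn_normKer hα hE hne hEz hcar ht
  refine le_trans ?_ (setIntegral_mono_set hint
    (ae_restrict_of_ae (ae_normKer_nonneg α hE hne hEz ht))
    (Filter.Eventually.of_forall hm : Ioo m (m + dE E (cpt t) / 2) ≤ᵐ[volume] _))
  have hconst : ∫ _ in Ioo m (m + dE E (cpt t) / 2), c * Real.log 2 / (2 * dE E (cpt t)) ^ 2 =
      c * Real.log 2 / 8 / dE E (cpt t) := by
    rw [setIntegral_const, Real.volume_real_Ioo_of_le (by linarith), smul_eq_mul]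
    field_simp
    ring
  rw [← hconst]
  refine integral_mono_ae (integrable_const _) (hint.mono_set hm) ?_
  filter_upwards [ae_restrict_of_ae hEz.ae_notMem, ae_restrict_mem measurableSet_Ioo]
    with θ hθE hθ
  have hd := dE_pos hE hne hθE
  have h1 := hmφ θ hθ
  have h2 := norm_cpt_sub_cpt_le θ φ
  have h3 : dE E (cpt θ) ≤ ‖cpt θ - cpt φ‖ := by
    rw [← dist_eq_norm]
    exact Metric.infDist_le_dist_of_mem he
  have h4 := norm_sub_le_norm_sub_add_norm_sub (cpt t) (cpt φ) (cpt θ)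
  rw [norm_sub_rev (cpt φ)] at h4
  have hr0 : 0 < ‖cpt t - cpt θ‖ := by
    have := dE_le_add E (cpt θ) (cpt t)
    rw [norm_sub_rev] at this
    linarith
  have hx : dE E (cpt θ) / dE E (cpt t) ≤ 1 / 2 := by
    rw [div_le_iff₀ hδ]
    linarith
  have hx0 := div_pos hd hδ
  have h5 : Real.log 2 ≤ Real.log (dE E (cpt θ) / dE E (cpt t))⁻¹ := by
    refine Real.log_le_log two_pos ?_
    rw [le_inv_comm₀ two_pos hx0]
    linarith
  have h6 : c * Real.log 2 ≤ rsProfile α (dE E (cpt θ) / dE E (cpt t)) :=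
    (mul_le_mul_of_nonneg_left h5 hc.le).trans (hlog _ hx0 hx)
  have h7 : 0 ≤ rsProfile α (dE E (cpt θ) / dE E (cpt t)) := rsProfile_nonneg hx0
  rw [normKer]
  gcongr
  linarith

end Estimates


/-- For `α ∈ (0,1/2)` and a Carleson set `E ⊆ 𝕋` of measure zero, the two-sided
estimate `D_ζ(f_{α,E}) ≍ dist(ζ,E)^{2α−1}` (uniformly in `ζ ∈ 𝕋∖E`) holds iff `E` is an
`𝓛₁`-set. -/
theorem statement0 (α : ℝ) (hα : α ∈ Set.Ioo (0 : ℝ) (1 / 2))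
    (E : Set ℂ) (hEc : IsClosed E) (hEsub : E ⊆ circleT)
    (hEz : MeasureZeroOnCircle E) (hEcar : CarlesonSet E) :
    (∃ c₁ > (0:ℝ), ∃ c₂ > (0:ℝ), ∀ ζ ∈ circleT \ E,
        c₁ * dE E ζ ^ (2 * α - 1) ≤ locDir (fun t => t ^ α) E ζ ∧
        locDir (fun t => t ^ α) E ζ ≤ c₂ * dE E ζ ^ (2 * α - 1)) ↔ L1Set E := by
  rcases E.eq_empty_or_nonempty with rfl | hne
  · have h0 : ∀ z, dE ∅ z = 0 := fun z => Metric.infDist_empty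
    have hα' : 2 * α - 1 ≠ 0 := by linarith [hα.2]
    refine ⟨fun _ => ⟨1, one_pos, fun ζ _ => ?_⟩, fun _ => ⟨1, one_pos, 1, one_pos, fun ζ _ => ?_⟩⟩
    · simp [circIntOn, h0]
    · simp [locDir, circInt, RSker, h0, Real.zero_rpow hα', Real.zero_rpow hα.1.ne']
  have hpi := pi_pos
  have hmul : ∀ {δ x : ℝ}, 0 < δ →
      1 / (2 * π) * (δ ^ (2 * α) * (x / δ)) = x / (2 * π) * δ ^ (2 * α - 1) := by
    intro δ x hδ
    rw [Real.rpow_sub_one hδ.ne']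
    field_simp
  constructor
  · rintro ⟨_, _, c₂, hc₂, hbound⟩
    obtain ⟨c, hc, hgamma⟩ := exists_setIntegral_gammaLog_le hα hEc hne hEz hEcar
    have hH : 0 ≤ ∫ v : ℝ, (1 + |v|) ^ (2 * α - 2) := integral_nonneg fun v => by positivity
    refine ⟨c * (2 * π * c₂) + 16 * ∫ v : ℝ, (1 + |v|) ^ (2 * α - 2), by positivity,
      fun ζ hζ => ?_⟩
    obtain ⟨t, -, rfl⟩ := exists_cpt_eq hζ.1 0
    have hδ := dE_pos hEc hne hζ.2
    have hub := (hbound _ hζ).2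
    rw [locDir_rpow_eq α t hEc hne hEz hζ.2] at hub
    have hint : ∫ θ in Ioc (t - π) (t - π + 2 * π), normKer α E (cpt t) (cpt θ) ≤
        2 * π * c₂ / dE E (cpt t) := by
      have h := hmul (x := 2 * π * c₂) hδ
      rw [mul_div_cancel_left₀ c₂ (by positivity : 2 * π ≠ 0)] at h
      rw [← h] at hub
      exact le_of_mul_le_mul_left (le_of_mul_le_mul_left hub (by positivity))
        (Real.rpow_pos_of_pos hδ _)
    rw [circIntOn_GammaSet_eq hEc hne _ (t - π), add_div, mul_div_assoc]
    exact (hgamma t hζ.2).trans (by gcongr)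
  · rintro ⟨C, hC, hL⟩
    obtain ⟨c, hc, hlow⟩ := exists_le_setIntegral_normKer hα hEc hEsub hne hEz hEcar
    have hH : 0 ≤ ∫ v : ℝ, (1 + |v|) ^ (2 * α - 2) := integral_nonneg fun v => by positivity
    have hK : 0 ≤ ∫ v, endpointLog v := integral_nonneg endpointLog_nonneg
    refine ⟨c / (2 * π), by positivity,
      (64 * (∫ v : ℝ, (1 + |v|) ^ (2 * α - 2)) + 8 * (∫ v, endpointLog v) + C) / (2 * π),
      by positivity, fun ζ hζ => ?_⟩
    obtain ⟨t, -, rfl⟩ := exists_cpt_eq hζ.1 0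
    have hδ := dE_pos hEc hne hζ.2
    have hLt := hL _ hζ
    rw [circIntOn_GammaSet_eq hEc hne _ (t - π)] at hLt
    rw [locDir_rpow_eq α t hEc hne hEz hζ.2, ← hmul hδ, ← hmul hδ]
    have hlt := hlow t hζ.2
    have hut := setIntegral_normKer_le hα hEc hEsub hne hEz hEcar hζ.2
    constructor
    · gcongr
    · gcongr
      rw [add_div _ C]
      linarith
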